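/- arXiv:2406.13661 — 5 statements merged into one kernel-verified Lean document; each statement's English description precedes it below -/
import Mathlib

section
/- Let ρ_* and ρ_g be probability densities on ℝ^d, and for a measurable function D : ℝ^d → (0,1) define the GAN value V(D) = ∫_{ℝ^d} ρ_*(x) log D(x) dx + ∫_{ℝ^d} ρ_g(x) log(1 - D(x)) dx, which is well defined in [-∞, 0] since both integrands are nonpositive. Let D*(x) = ρ_*(x)/(ρ_*(x) + ρ_g(x)) on the set where ρ_*(x) + ρ_g(x) > 0 (with an arbitrary value, say 1/2, elsewhere). Then for every measurable D : ℝ^d → (0,1), V(D) ≤ V(D*). -/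
/-!
The inequality holds pointwise: for `a, b ≥ 0` and `t ∈ (0,1)`, the quantity
`a log t + b log (1 - t)` is at most its value at `t = a / (a + b)`. This is Gibbs' inequality
for two-point distributions, and follows by applying `log u ≤ u - 1` to each term
(`gan_mul_log_le`) and adding: the linear error terms cancel. Since every integrand is
nonnegative and measurable, the two lower integrals on each side merge into one and
monotonicity concludes, with no integrability needed.
-/

open MeasureTheory

/-- The tangent-line bound `log u ≤ u - 1` at `u = t / (a / c)`, scaled by `a`. It survives at
`a = 0` because of the factor `a`. -/
lemma gan_mul_log_le {a c t : ℝ} (ha : 0 ≤ a) (hc : 0 < c) (ht : 0 < t) :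
    a * Real.log t ≤ a * Real.log (a / c) + (t * c - a) := by
  rcases ha.eq_or_lt with rfl | ha
  · simpa using (mul_pos ht hc).le
  · have hs : 0 < a / c := div_pos ha hc
    have h := mul_le_mul_of_nonneg_left (Real.log_le_sub_one_of_pos (div_pos ht hs)) ha.le
    rw [Real.log_div ht.ne' hs.ne'] at h
    have e : a * (t / (a / c) - 1) = t * c - a := by field_simp
    linarith

lemma gan_pointwise {a b t : ℝ} (ha : 0 ≤ a) (hb : 0 ≤ b) (hab : 0 < a + b)
    (ht : t ∈ Set.Ioo (0 : ℝ) 1) :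
    a * Real.log t + b * Real.log (1 - t) ≤
      a * Real.log (a / (a + b)) + b * Real.log (1 - a / (a + b)) := by
  have e : 1 - a / (a + b) = b / (a + b) := by field_simp; ring
  rw [e]
  have h1 := gan_mul_log_le ha hab ht.1
  have h2 := gan_mul_log_le hb hab (sub_pos.2 ht.2)
  linarith

lemma gan_neg_mul_log_nonneg {a s : ℝ} (ha : 0 ≤ a) (h0 : 0 ≤ s) (h1 : s ≤ 1) :
    0 ≤ -(a * Real.log s) :=
  neg_nonneg.2 (mul_nonpos_of_nonneg_of_nonpos ha (Real.log_nonpos h0 h1))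

/-- Optimality of the GAN discriminator `D* = ρ_*/(ρ_* + ρ_g)`: for every measurable
discriminator `D : ℝ^d → (0,1)`, `V(D) ≤ V(D*)`, where
`V(D) = ∫ ρ_* log D + ∫ ρ_g log (1-D) ∈ [-∞, 0]`.  Since both integrands are nonpositive,
`V` is encoded through its negative, as a sum of lower Lebesgue integrals in `[0,∞]`,
and the claim `V(D) ≤ V(D*)` reads `-V(D*) ≤ -V(D)`. -/
theorem gan_optimal_discriminator {d : ℕ}
    (ρs ρg : EuclideanSpace ℝ (Fin d) → ℝ)
    (hρsmeas : Measurable ρs) (hρgmeas : Measurable ρg)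
    (hρsnonneg : ∀ x, 0 ≤ ρs x) (hρgnonneg : ∀ x, 0 ≤ ρg x)
    (hρsnorm : ∫ x, ρs x = 1) (hρgnorm : ∫ x, ρg x = 1)
    (Dstar : EuclideanSpace ℝ (Fin d) → ℝ)
    (hDstar : ∀ x, Dstar x =
      if 0 < ρs x + ρg x then ρs x / (ρs x + ρg x) else 1/2) :
    ∀ D : EuclideanSpace ℝ (Fin d) → ℝ, Measurable D → (∀ x, D x ∈ Set.Ioo (0:ℝ) 1) →
      (∫⁻ x, ENNReal.ofReal (-(ρs x * Real.log (Dstar x))))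
        + (∫⁻ x, ENNReal.ofReal (-(ρg x * Real.log (1 - Dstar x))))
      ≤ (∫⁻ x, ENNReal.ofReal (-(ρs x * Real.log (D x))))
        + (∫⁻ x, ENNReal.ofReal (-(ρg x * Real.log (1 - D x)))) := by
  intro D hD hD01
  have hDs : Measurable Dstar := by
    rw [funext hDstar]
    exact Measurable.ite (measurableSet_lt measurable_const (hρsmeas.add hρgmeas))
      (hρsmeas.div (hρsmeas.add hρgmeas)) measurable_const
  rw [← lintegral_add_left (by fun_prop), ← lintegral_add_left (by fun_prop)]
  refine lintegral_mono fun x => ?_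
  have ha := hρsnonneg x
  have hb := hρgnonneg x
  obtain ⟨ht0, ht1⟩ := hD01 x
  by_cases hab : 0 < ρs x + ρg x
  · have hs : Dstar x = ρs x / (ρs x + ρg x) := by rw [hDstar, if_pos hab]
    have hs0 : 0 ≤ Dstar x := hs ▸ div_nonneg ha hab.le
    have hs1 : Dstar x ≤ 1 := hs ▸ (div_le_one hab).2 (by linarith)
    have key := gan_pointwise ha hb hab (hD01 x)
    rw [← hs] at key
    rw [← ENNReal.ofReal_add (gan_neg_mul_log_nonneg ha hs0 hs1)
        (gan_neg_mul_log_nonneg hb (by linarith) (by linarith)),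
      ← ENNReal.ofReal_add (gan_neg_mul_log_nonneg ha ht0.le ht1.le)
        (gan_neg_mul_log_nonneg hb (by linarith) (by linarith))]
    exact ENNReal.ofReal_le_ofReal (by linarith)
  · have h1 : ρs x = 0 := by linarith
    have h2 : ρg x = 0 := by linarith
    simp [h1, h2]
end

section
/- Let ρ_* and ρ_g be probability densities on ℝ^d, and define C = ∫_{ℝ^d} ρ_*(x) log(ρ_*(x)/(ρ_*(x)+ρ_g(x))) dx + ∫_{ℝ^d} ρ_g(x) log(ρ_g(x)/(ρ_*(x)+ρ_g(x))) dx, with the conventions 0 log 0 = 0 and values in [-∞, ∞]. Then C = -log 4 + D_KL(ρ_* ∥ (ρ_*+ρ_g)/2) + D_KL(ρ_g ∥ (ρ_*+ρ_g)/2); in particular C ≥ -log 4, with equality if and only if ρ_g = ρ_* almost everywhere. -/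
/-!
Write `m = (ρs + ρg) / 2`. Pointwise, `ρs * log (ρs / m)` is `ρs * log (ρs / (ρs + ρg))` plus
`ρs * log 2`; integrating this and its mirror image gives the formula for `C`, with
`2 * log 2 = log 4`.

For the inequality, `log t ≥ 1 - 1 / t` yields `ρs * log (ρs / m) ≥ (ρs - ρg) / 2`, strictly where
`ρs ≠ ρg` (`mul_log_div_mid_ge`, `mul_log_div_mid_gt`). Added to its mirror image, this shows that
the sum of the two divergence integrands is pointwise nonnegative and vanishes exactly where
`ρs = ρg`, so its integral is nonnegative and is zero iff `ρg = ρs` almost everywhere. The same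
lower bound, with the upper bound `ρs * log 2`, dominates the integrands by `ρs + ρg`, which gives
integrability.
-/

open MeasureTheory

lemma mul_log_div_mid_eq {a b : ℝ} (ha : 0 ≤ a) (hb : 0 ≤ b) :
    a * Real.log (a / ((a + b) / 2)) = a * Real.log (a / (a + b)) + a * Real.log 2 := by
  rcases ha.eq_or_lt with rfl | ha
  · simp
  · have hab : 0 < a + b := by linarith
    rw [← mul_add, ← Real.log_mul (by positivity) (by norm_num)]
    congr 2
    field_simp

/-- Strict form of `log t ≥ 1 - 1 / t` at `t = 2 * a / (a + b)`, multiplied by `a`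
when `a > 0`; when `a = 0` it reads `-b / 2 < 0`. -/
lemma mul_log_div_mid_gt {a b : ℝ} (ha : 0 ≤ a) (hb : 0 ≤ b) (hne : a ≠ b) :
    (a - b) / 2 < a * Real.log (a / ((a + b) / 2)) := by
  rcases ha.eq_or_lt with rfl | ha
  · have : 0 < b := lt_of_le_of_ne hb hne
    simp only [zero_mul]
    linarith
  · have hab : 0 < a + b := by linarith
    have hlog : Real.log (((a + b) / 2) / a) < ((a + b) / 2) / a - 1 := by
      refine Real.log_lt_sub_one_of_pos (by positivity) fun h => hne ?_
      rw [div_eq_one_iff_eq ha.ne'] at h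
      linarith
    rw [← inv_div ((a + b) / 2) a, Real.log_inv]
    have hmul := mul_lt_mul_of_pos_left hlog ha
    have hexp : a * (((a + b) / 2) / a - 1) = (b - a) / 2 := by
      field_simp
      ring
    linarith

lemma mul_log_div_mid_ge {a b : ℝ} (ha : 0 ≤ a) (hb : 0 ≤ b) :
    (a - b) / 2 ≤ a * Real.log (a / ((a + b) / 2)) := by
  by_cases hne : a = b
  · subst hne
    rcases ha.eq_or_lt with rfl | ha
    · simp
    · simp [ha.ne']
  · exact (mul_log_div_mid_gt ha hb hne).le

lemma abs_mul_log_div_mid_le {a b : ℝ} (ha : 0 ≤ a) (hb : 0 ≤ b) :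
    |a * Real.log (a / ((a + b) / 2))| ≤ a + b := by
  have hlow := mul_log_div_mid_ge ha hb
  have hnonpos : Real.log (a / (a + b)) ≤ 0 :=
    Real.log_nonpos (by positivity) (div_le_one_of_le₀ (by linarith) (by positivity))
  have hprod := mul_nonpos_of_nonneg_of_nonpos ha hnonpos
  have htwo : a * Real.log 2 ≤ a * 1 :=
    mul_le_mul_of_nonneg_left (by linarith [Real.log_two_lt_d9]) ha
  have heq := mul_log_div_mid_eq ha hb
  rw [abs_le]
  constructor <;> linarith

lemma integrable_mul_log_div_mid {α : Type*} [MeasurableSpace α] {μ : Measure α} {f g : α → ℝ}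
    (hf : Measurable f) (hg : Measurable g) (hf0 : ∀ x, 0 ≤ f x) (hg0 : ∀ x, 0 ≤ g x)
    (hfi : Integrable f μ) (hgi : Integrable g μ) :
    Integrable (fun x => f x * Real.log (f x / ((f x + g x) / 2))) μ := by
  refine (hfi.add hgi).mono' (Measurable.aestronglyMeasurable (by fun_prop)) ?_
  exact Filter.Eventually.of_forall fun x => abs_mul_log_div_mid_le (hf0 x) (hg0 x)

/-- Replacing the sum `f + g` by the midpoint `(f + g) / 2` in the logarithm shifts the integral
by `log 2`, since `f` is a probability density. -/
lemma integral_mul_log_div_add {α : Type*} [MeasurableSpace α] {μ : Measure α} {f g : α → ℝ}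
    (hf : Measurable f) (hg : Measurable g) (hf0 : ∀ x, 0 ≤ f x) (hg0 : ∀ x, 0 ≤ g x)
    (hfi : Integrable f μ) (hgi : Integrable g μ) (hf1 : ∫ x, f x ∂μ = 1) :
    ∫ x, f x * Real.log (f x / (f x + g x)) ∂μ
      = (∫ x, f x * Real.log (f x / ((f x + g x) / 2)) ∂μ) - Real.log 2 := by
  have hpt : ∀ x, f x * Real.log (f x / (f x + g x))
      = f x * Real.log (f x / ((f x + g x) / 2)) - f x * Real.log 2 := fun x => by
    rw [mul_log_div_mid_eq (hf0 x) (hg0 x)]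
    ring
  simp_rw [hpt]
  rw [integral_sub (integrable_mul_log_div_mid hf hg hf0 hg0 hfi hgi) (hfi.mul_const _),
    integral_mul_const, hf1, one_mul]

/-- The GAN objective at the optimal discriminator:
`C = -log 4 + D_KL(ρ_* ∥ (ρ_*+ρ_g)/2) + D_KL(ρ_g ∥ (ρ_*+ρ_g)/2)`; in particular
`C ≥ -log 4` with equality iff `ρ_g = ρ_*` almost everywhere.  (With Lean's conventions
`log 0 = 0` and `x/0 = 0`, all integrands below implement the convention `0 log 0 = 0`,
and all integrands are integrable, so the real-valued Bochner integrals capture the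
extended-real-valued statement.) -/
theorem gan_optimal_generator {d : ℕ}
    (ρs ρg : EuclideanSpace ℝ (Fin d) → ℝ)
    (hρsmeas : Measurable ρs) (hρgmeas : Measurable ρg)
    (hρsnonneg : ∀ x, 0 ≤ ρs x) (hρgnonneg : ∀ x, 0 ≤ ρg x)
    (hρsnorm : ∫ x, ρs x = 1) (hρgnorm : ∫ x, ρg x = 1)
    (C : ℝ)
    (hC : C = (∫ x, ρs x * Real.log (ρs x / (ρs x + ρg x)))
              + ∫ x, ρg x * Real.log (ρg x / (ρs x + ρg x))) :
    C = -Real.log 4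
          + (∫ x, ρs x * Real.log (ρs x / ((ρs x + ρg x) / 2)))
          + (∫ x, ρg x * Real.log (ρg x / ((ρs x + ρg x) / 2)))
    ∧ -Real.log 4 ≤ C
    ∧ (C = -Real.log 4 ↔ ρg =ᵐ[volume] ρs) := by
  -- A non-integrable function has Bochner integral `0`, so total mass `1` forces integrability.
  have hsi : Integrable ρs := by
    by_contra h
    simp [integral_undef h] at hρsnorm
  have hgi : Integrable ρg := by
    by_contra h
    simp [integral_undef h] at hρgnorm
  have hIs := integrable_mul_log_div_mid hρsmeas hρgmeas hρsnonneg hρgnonneg hsi hgi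
  have hIg := integrable_mul_log_div_mid hρgmeas hρsmeas hρgnonneg hρsnonneg hgi hsi
  have hs := integral_mul_log_div_add hρsmeas hρgmeas hρsnonneg hρgnonneg hsi hgi hρsnorm
  have hg := integral_mul_log_div_add hρgmeas hρsmeas hρgnonneg hρsnonneg hgi hsi hρgnorm
  simp only [add_comm (ρg _) (ρs _)] at hIg hg
  have hlog4 : Real.log 4 = 2 * Real.log 2 := by
    rw [show (4 : ℝ) = 2 ^ 2 by norm_num, Real.log_pow]
    norm_num
  have hCeq : C = -Real.log 4
      + (∫ x, ρs x * Real.log (ρs x / ((ρs x + ρg x) / 2)))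
      + (∫ x, ρg x * Real.log (ρg x / ((ρs x + ρg x) / 2))) := by
    rw [hC, hs, hg, hlog4]
    ring
  set F : EuclideanSpace ℝ (Fin d) → ℝ := fun x =>
    ρs x * Real.log (ρs x / ((ρs x + ρg x) / 2)) + ρg x * Real.log (ρg x / ((ρs x + ρg x) / 2))
    with hF
  have hCF : C = -Real.log 4 + ∫ x, F x := by
    rw [hCeq, hF, integral_add hIs hIg]
    ring
  have hF0 : ∀ x, 0 ≤ F x := fun x => by
    have h₁ := mul_log_div_mid_ge (hρsnonneg x) (hρgnonneg x)
    have h₂ := mul_log_div_mid_ge (hρgnonneg x) (hρsnonneg x)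
    rw [add_comm (ρg x) (ρs x)] at h₂
    simp only [hF]
    linarith
  have hFzero : ∀ x, F x = 0 ↔ ρg x = ρs x := fun x => by
    constructor
    · intro h
      by_contra hne
      have h₁ := mul_log_div_mid_gt (hρsnonneg x) (hρgnonneg x) (Ne.symm hne)
      have h₂ := mul_log_div_mid_gt (hρgnonneg x) (hρsnonneg x) hne
      rw [add_comm (ρg x) (ρs x)] at h₂
      simp only [hF] at h
      linarith
    · intro h
      rcases eq_or_ne (ρs x) 0 with h0 | h0 <;> simp [hF, h, h0]
  refine ⟨hCeq, ?_, ?_⟩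
  · have := integral_nonneg (μ := volume) (f := F) hF0
    linarith
  · have hiff : C = -Real.log 4 ↔ ∫ x, F x = 0 := by
      rw [hCF]
      exact add_eq_left
    rw [hiff, integral_eq_zero_iff_of_nonneg (f := F) hF0 (hIs.add hIg)]
    exact Filter.eventually_congr (Filter.Eventually.of_forall hFzero)
end

section
/- Let ρ_* be a probability density on ℝ^d that is continuously differentiable and everywhere positive, and let s : ℝ^d → ℝ^d be a continuously differentiable, compactly supported vector field. Assume x ↦ ‖∇ log ρ_*(x)‖² ρ_*(x) is integrable. Then the score-matching identity holds: (1/2) ∫_{ℝ^d} ‖s(x) - ∇ log ρ_*(x)‖² ρ_*(x) dx = ∫_{ℝ^d} [ (1/2)‖s(x)‖² + (div s)(x) ] ρ_*(x) dx + (1/2) ∫_{ℝ^d} ‖∇ log ρ_*(x)‖² ρ_*(x) dx. -/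
/-! Expanding the square, `‖s - ∇log ρ‖² ρ = ‖s‖² ρ - 2 ⟪s, ∇log ρ⟫ ρ + ‖∇log ρ‖² ρ`. Since
`∇ρ = ρ ∇log ρ`, the cross term `⟪s, ∇log ρ⟫ ρ` is the directional derivative `Dρ(x)(s x)`
(`inner_gradient_log_mul`), and integrating by parts in each coordinate direction turns its integral
into `-∫ (div s) ρ` (`integral_fderiv_apply_eq_neg_divergence`). The terms containing `s` are
continuous with compact support, hence integrable; the remaining one is integrable by assumption. -/

open MeasureTheory

/-- The divergence `div s = ∑ i ∂ᵢ sᵢ` of a vector field on `ℝ^d`. -/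
noncomputable def vectorDivergence {d : ℕ}
    (s : EuclideanSpace ℝ (Fin d) → EuclideanSpace ℝ (Fin d))
    (x : EuclideanSpace ℝ (Fin d)) : ℝ :=
  ∑ i, fderiv ℝ s x (EuclideanSpace.single i 1) i

lemma continuous_vectorDivergence {d : ℕ}
    {s : EuclideanSpace ℝ (Fin d) → EuclideanSpace ℝ (Fin d)} (hs : ContDiff ℝ 1 s) :
    Continuous (vectorDivergence s) := by
  have h := hs.continuous_fderiv one_ne_zero
  unfold vectorDivergence
  fun_prop

lemma hasCompactSupport_vectorDivergence {d : ℕ}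
    {s : EuclideanSpace ℝ (Fin d) → EuclideanSpace ℝ (Fin d)} (hs : HasCompactSupport s) :
    HasCompactSupport (vectorDivergence s) := by
  refine (hs.fderiv ℝ).mono fun x hx => ?_
  contrapose! hx
  simp_all [vectorDivergence]

/-- Integration by parts: `∫ Dρ(x)(s x) dx = -∫ (div s) ρ` for a compactly supported `s`. -/
lemma integral_fderiv_apply_eq_neg_divergence {d : ℕ}
    {ρ : EuclideanSpace ℝ (Fin d) → ℝ} (hρ : ContDiff ℝ 1 ρ)
    {s : EuclideanSpace ℝ (Fin d) → EuclideanSpace ℝ (Fin d)}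
    (hs : ContDiff ℝ 1 s) (hscomp : HasCompactSupport s) :
    ∫ x, fderiv ℝ ρ x (s x) = - ∫ x, vectorDivergence s x * ρ x := by
  have hs' := hs.continuous_fderiv one_ne_zero
  have hρ' := hρ.continuous_fderiv one_ne_zero
  have hsc := hs.continuous
  have hρc := hρ.continuous
  have hcoord : ∀ (i : Fin d) x v, fderiv ℝ (fun y => s y i) x v = fderiv ℝ s x v i := by
    intro i x v
    have h := ((EuclideanSpace.proj (𝕜 := ℝ) i).hasFDerivAt.comp x
      (hs.differentiable one_ne_zero x).hasFDerivAt).fderiv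
    exact congrArg (fun L => L v) h
  have hsi : ∀ i : Fin d, HasCompactSupport (fun x => s x i) := fun i =>
    hscomp.comp_left (g := fun v : EuclideanSpace ℝ (Fin d) => v i) rfl
  have hdsi : ∀ i : Fin d,
      HasCompactSupport (fun x => fderiv ℝ s x (EuclideanSpace.single i 1) i) := fun i =>
    (hscomp.fderiv_apply ℝ (EuclideanSpace.single i 1)).comp_left
      (g := fun v : EuclideanSpace ℝ (Fin d) => v i) rfl
  have int1 : ∀ i : Fin d,
      Integrable (fun x => fderiv ℝ s x (EuclideanSpace.single i 1) i * ρ x) := fun i =>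
    Continuous.integrable_of_hasCompactSupport (by fun_prop) ((hdsi i).mul_right)
  have int2 : ∀ i : Fin d,
      Integrable (fun x => s x i * fderiv ℝ ρ x (EuclideanSpace.single i 1)) := fun i =>
    Continuous.integrable_of_hasCompactSupport (by fun_prop) ((hsi i).mul_right)
  have int3 : ∀ i : Fin d, Integrable (fun x => s x i * ρ x) := fun i =>
    Continuous.integrable_of_hasCompactSupport (by fun_prop) ((hsi i).mul_right)
  have key : ∀ i : Fin d, ∫ x, s x i * fderiv ℝ ρ x (EuclideanSpace.single i 1)
      = - ∫ x, fderiv ℝ s x (EuclideanSpace.single i 1) i * ρ x := by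
    intro i
    have hd : Differentiable ℝ (fun x => s x i) := fun x =>
      (EuclideanSpace.proj (𝕜 := ℝ) i).differentiableAt.comp x (hs.differentiable one_ne_zero x)
    have h := integral_mul_fderiv_eq_neg_fderiv_mul_of_integrable (μ := volume)
      (f := fun x => s x i) (g := ρ) (v := EuclideanSpace.single i 1)
      (by simpa only [hcoord] using int1 i) (int2 i) (int3 i)
      (fun x _ => hd x) (fun x _ => hρ.differentiable one_ne_zero x)
    simpa only [hcoord] using h
  have hexp : ∀ x, fderiv ℝ ρ x (s x)
      = ∑ i, s x i * fderiv ℝ ρ x (EuclideanSpace.single i 1) := by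
    intro x
    conv_lhs => rw [← (EuclideanSpace.basisFun (Fin d) ℝ).sum_repr (s x)]
    simp
  simp only [hexp, vectorDivergence, Finset.sum_mul]
  rw [integral_finsetSum _ fun i _ => int2 i, integral_finsetSum _ fun i _ => int1 i,
    ← Finset.sum_neg_distrib]
  exact Finset.sum_congr rfl fun i _ => key i

/-- `ρ ∇log ρ = ∇ρ`, paired with a vector `v`. -/
lemma inner_gradient_log_mul {d : ℕ} {ρ : EuclideanSpace ℝ (Fin d) → ℝ}
    {x : EuclideanSpace ℝ (Fin d)} (hρ : DifferentiableAt ℝ ρ x) (hx : ρ x ≠ 0)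
    (v : EuclideanSpace ℝ (Fin d)) :
    inner ℝ v (gradient (fun y => Real.log (ρ y)) x) * ρ x = fderiv ℝ ρ x v := by
  rw [real_inner_comm, inner_gradient_left, fderiv.log hρ hx]
  simp [field]

/-- Hyvärinen's score-matching identity: for a positive `C¹` probability density `ρ_*` and a
`C¹` compactly supported vector field `s`,
`(1/2)∫ ‖s - ∇log ρ_*‖² ρ_* = ∫ ((1/2)‖s‖² + div s) ρ_* + (1/2)∫ ‖∇log ρ_*‖² ρ_*`. -/
theorem score_matching_identity {d : ℕ}
    (ρ : EuclideanSpace ℝ (Fin d) → ℝ)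
    (hρ : ContDiff ℝ 1 ρ) (hρpos : ∀ x, 0 < ρ x)
    (hρnorm : ∫ x, ρ x = 1)
    (s : EuclideanSpace ℝ (Fin d) → EuclideanSpace ℝ (Fin d))
    (hs : ContDiff ℝ 1 s) (hscomp : HasCompactSupport s)
    (hscoreint : Integrable (fun x => ‖gradient (fun y => Real.log (ρ y)) x‖ ^ 2 * ρ x)) :
    (1 / 2) * ∫ x, ‖s x - gradient (fun y => Real.log (ρ y)) x‖ ^ 2 * ρ x
      = (∫ x, ((1 / 2) * ‖s x‖ ^ 2 + vectorDivergence s x) * ρ x)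
        + (1 / 2) * ∫ x, ‖gradient (fun y => Real.log (ρ y)) x‖ ^ 2 * ρ x := by
  have hs0 := hs.continuous
  have hρ0 := hρ.continuous
  have hρ' := hρ.continuous_fderiv one_ne_zero
  have hdiv := continuous_vectorDivergence hs
  have i1 : Integrable (fun x => (1 / 2) * ‖s x‖ ^ 2 * ρ x) :=
    Continuous.integrable_of_hasCompactSupport (by fun_prop)
      (hscomp.mono fun x hx => by contrapose! hx; simp_all)
  have i2 : Integrable (fun x => vectorDivergence s x * ρ x) :=
    Continuous.integrable_of_hasCompactSupport (by fun_prop)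
      (hasCompactSupport_vectorDivergence hscomp).mul_right
  have i3 : Integrable (fun x => fderiv ℝ ρ x (s x)) :=
    Continuous.integrable_of_hasCompactSupport (by fun_prop)
      (hscomp.mono fun x hx => by contrapose! hx; simp_all)
  have hpt : ∀ x, (1 / 2) * (‖s x - gradient (fun y => Real.log (ρ y)) x‖ ^ 2 * ρ x)
      = (1 / 2) * ‖s x‖ ^ 2 * ρ x - fderiv ℝ ρ x (s x)
        + (1 / 2) * (‖gradient (fun y => Real.log (ρ y)) x‖ ^ 2 * ρ x) := by
    intro x
    rw [norm_sub_sq_real, ← inner_gradient_log_mul (hρ.differentiable one_ne_zero x)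
      (hρpos x).ne' (s x)]
    ring
  rw [← integral_const_mul, ← integral_const_mul]
  simp only [hpt, add_mul]
  have i4 : Integrable (fun x => (1 / 2) * ‖s x‖ ^ 2 * ρ x - fderiv ℝ ρ x (s x)) := i1.sub i3
  rw [integral_add i4 (hscoreint.const_mul _), integral_sub i1 i3,
    integral_fderiv_apply_eq_neg_divergence hρ hs hscomp, integral_add i1 i2]
  ring
end

section
/- Let h > 0 and let U₀, U₁ : ℝ^d → ℝ be continuously differentiable with Z₀ = ∫_{ℝ^d} e^{-U₀(x)} dx and Z₁ = ∫_{ℝ^d} e^{-U₁(y)} dy finite and positive. For k ∈ {0,1} define α_k(x,y) = U_k(x) + (1/2)(y-x)·∇U_k(x) + (h/4)‖∇U_k(x)‖². Then the following identity of integrals of nonnegative functions holds: ∫_{ℝ^d} ∫_{ℝ^d} (e^{-U₀(x)}/Z₀) · (4πh)^{-d/2} e^{-‖y - x + h∇U₀(x)‖²/(4h)} · e^{-α₁(y,x) + α₀(x,y)} dx dy = Z₁ / Z₀. -/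
/-!
Up to the constant `log (Z₁/Z₀)`, the work increment is the logarithm of the ratio between the
backward and the forward Langevin path densities: completing the square twice,
`-U₀(x) - ‖y - x + h∇U₀(x)‖²/(4h) - α₁(y,x) + α₀(x,y) = -U₁(y) - ‖x - y + h∇U₁(y)‖²/(4h)`
(`jarzynski_exponent`). The integrand is therefore `e^{-U₁(y)}/Z₀` times the density in `x` of the
Langevin step started from `y` with potential `U₁`. By Tonelli the `x`-integral can be taken first;
it is a translated Gaussian integral equal to `1` (`lintegral_heat_kernel`), and the `y`-integral
leaves `Z₁/Z₀`.
-/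

open MeasureTheory
open scoped RealInnerProductSpace

/-- The work increment `α_k(x,y) = U_k(x) + (1/2)(y-x)·∇U_k(x) + (h/4)‖∇U_k(x)‖²`. -/
noncomputable def jarzynskiAlpha {d : ℕ} (h : ℝ)
    (U : EuclideanSpace ℝ (Fin d) → ℝ) (x y : EuclideanSpace ℝ (Fin d)) : ℝ :=
  U x + (1 / 2) * ⟪y - x, gradient U x⟫ + (h / 4) * ‖gradient U x‖ ^ 2

/-- Detailed-balance identity of the exponents: adding `α₀` to the forward exponent leaves
`-‖y - x‖²/(4h)`, and subtracting `α₁` completes the square of the backward kernel. -/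
lemma jarzynski_exponent {d : ℕ} {h : ℝ} (hh : 0 < h) (U₀ U₁ : EuclideanSpace ℝ (Fin d) → ℝ)
    (x y : EuclideanSpace ℝ (Fin d)) :
    -U₀ x + -‖y - x + h • gradient U₀ x‖ ^ 2 / (4 * h)
        + (-(jarzynskiAlpha h U₁ y x) + jarzynskiAlpha h U₀ x y)
      = -U₁ y + -(1 / (4 * h)) * ‖x + (h • gradient U₁ y - y)‖ ^ 2 := by
  have e : x + (h • gradient U₁ y - y) = (x - y) + h • gradient U₁ y := by abel
  rw [e, norm_add_sq_real, norm_add_sq_real, norm_sub_rev y x]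
  simp only [jarzynskiAlpha, inner_smul_right, norm_smul, mul_pow, Real.norm_eq_abs, sq_abs]
  field_simp
  ring

/-- The Langevin transition kernel has total mass `1`; the shift `-c` is its mean. -/
lemma lintegral_heat_kernel {d : ℕ} {h : ℝ} (hh : 0 < h) (c : EuclideanSpace ℝ (Fin d)) :
    ∫⁻ x : EuclideanSpace ℝ (Fin d), ENNReal.ofReal
      ((4 * Real.pi * h) ^ (-(d : ℝ) / 2) * Real.exp (-(1 / (4 * h)) * ‖x + c‖ ^ 2)) = 1 := by
  rw [lintegral_add_right_eq_self (μ := (volume : Measure (EuclideanSpace ℝ (Fin d))))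
    (fun x => ENNReal.ofReal
      ((4 * Real.pi * h) ^ (-(d : ℝ) / 2) * Real.exp (-(1 / (4 * h)) * ‖x‖ ^ 2))) c]
  have key : ∫ x : EuclideanSpace ℝ (Fin d),
      (4 * Real.pi * h) ^ (-(d : ℝ) / 2) * Real.exp (-(1 / (4 * h)) * ‖x‖ ^ 2) = 1 := by
    rw [integral_const_mul, GaussianFourier.integral_rexp_neg_mul_sq_norm (by positivity),
      finrank_euclideanSpace_fin, div_div_eq_mul_div, div_one,
      show Real.pi * (4 * h) = 4 * Real.pi * h by ring, ← Real.rpow_add (by positivity),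
      show -(d : ℝ) / 2 + d / 2 = 0 by ring, Real.rpow_zero]
  -- A Bochner integral with nonzero value cannot be the junk value of a non-integrable function.
  rw [← ofReal_integral_eq_lintegral_ofReal
    (Integrable.of_integral_ne_zero (by rw [key]; exact one_ne_zero))
    (Filter.Eventually.of_forall fun x => by positivity), key, ENNReal.ofReal_one]

/-- One-step discrete-time Jarzynski equality: for one step of the unadjusted Langevin
algorithm started from `ρ₀ = e^{-U₀}/Z₀`, the expectation of the exponential of the
nonequilibrium work `e^{A₁} = e^{-α₁(y,x) + α₀(x,y)}` equals `Z₁/Z₀`. -/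
theorem jarzynski_one_step {d : ℕ} (h : ℝ) (hh : 0 < h)
    (U₀ U₁ : EuclideanSpace ℝ (Fin d) → ℝ)
    (hU₀ : ContDiff ℝ 1 U₀) (hU₁ : ContDiff ℝ 1 U₁)
    (hZ₀int : Integrable (fun x => Real.exp (-U₀ x)))
    (hZ₁int : Integrable (fun y => Real.exp (-U₁ y)))
    (Z₀ Z₁ : ℝ)
    (hZ₀ : Z₀ = ∫ x, Real.exp (-U₀ x)) (hZ₀pos : 0 < Z₀)
    (hZ₁ : Z₁ = ∫ y, Real.exp (-U₁ y)) (hZ₁pos : 0 < Z₁) :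
    ∫⁻ x, ∫⁻ y, ENNReal.ofReal
        ((Real.exp (-U₀ x) / Z₀)
          * (4 * Real.pi * h) ^ (-(d : ℝ) / 2)
          * Real.exp (-‖y - x + h • gradient U₀ x‖ ^ 2 / (4 * h))
          * Real.exp (-(jarzynskiAlpha h U₁ y x) + jarzynskiAlpha h U₀ x y))
      = ENNReal.ofReal (Z₁ / Z₀) := by
  have hg : Continuous (gradient U₁) :=
    (InnerProductSpace.toDual ℝ (EuclideanSpace ℝ (Fin d))).symm.continuous.comp
      (hU₁.continuous_fderiv one_ne_zero)
  have hUc : Continuous U₁ := hU₁.continuous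
  have hrev : ∀ x y : EuclideanSpace ℝ (Fin d),
      (Real.exp (-U₀ x) / Z₀)
          * (4 * Real.pi * h) ^ (-(d : ℝ) / 2)
          * Real.exp (-‖y - x + h • gradient U₀ x‖ ^ 2 / (4 * h))
          * Real.exp (-(jarzynskiAlpha h U₁ y x) + jarzynskiAlpha h U₀ x y)
        = (Real.exp (-U₁ y) / Z₀) * ((4 * Real.pi * h) ^ (-(d : ℝ) / 2)
          * Real.exp (-(1 / (4 * h)) * ‖x + (h • gradient U₁ y - y)‖ ^ 2)) := by
    intro x y
    have H := congrArg Real.exp (jarzynski_exponent hh U₀ U₁ x y)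
    rw [Real.exp_add, Real.exp_add, Real.exp_add (-U₁ y)] at H
    linear_combination ((4 * Real.pi * h) ^ (-(d : ℝ) / 2) / Z₀) * H
  simp_rw [hrev]
  rw [lintegral_lintegral_swap]
  · have hin : ∀ y : EuclideanSpace ℝ (Fin d), 0 ≤ Real.exp (-U₁ y) / Z₀ := fun y => by positivity
    have hinner : ∀ y : EuclideanSpace ℝ (Fin d), ∫⁻ x : EuclideanSpace ℝ (Fin d), ENNReal.ofReal
        ((Real.exp (-U₁ y) / Z₀) * ((4 * Real.pi * h) ^ (-(d : ℝ) / 2)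
          * Real.exp (-(1 / (4 * h)) * ‖x + (h • gradient U₁ y - y)‖ ^ 2)))
        = ENNReal.ofReal (Real.exp (-U₁ y) / Z₀) := fun y => by
      simp_rw [ENNReal.ofReal_mul (hin y)]
      rw [lintegral_const_mul' _ _ ENNReal.ofReal_ne_top, lintegral_heat_kernel hh, mul_one]
    simp_rw [hinner]
    rw [← ofReal_integral_eq_lintegral_ofReal (hZ₁int.div_const Z₀)
      (Filter.Eventually.of_forall hin), integral_div, ← hZ₁]
  · have hcont : Continuous fun p : EuclideanSpace ℝ (Fin d) × EuclideanSpace ℝ (Fin d) =>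
        (Real.exp (-U₁ p.2) / Z₀) * ((4 * Real.pi * h) ^ (-(d : ℝ) / 2)
          * Real.exp (-(1 / (4 * h)) * ‖p.1 + (h • gradient U₁ p.2 - p.2)‖ ^ 2)) := by
      fun_prop
    exact (ENNReal.measurable_ofReal.comp hcont.measurable).aemeasurable
end

section
/- Let h > 0 and let U₀, U₁ : ℝ^d → ℝ be continuously differentiable with Z₀ = ∫ e^{-U₀} and Z₁ = ∫ e^{-U₁} finite and positive, and define α_k(x,y) = U_k(x) + (1/2)(y-x)·∇U_k(x) + (h/4)‖∇U_k(x)‖² for k ∈ {0,1}. Then for every measurable f : ℝ^d → [0,∞), ∫_{ℝ^d} ∫_{ℝ^d} f(y) · (e^{-U₀(x)}/Z₀) · (4πh)^{-d/2} e^{-‖y - x + h∇U₀(x)‖²/(4h)} · e^{-α₁(y,x) + α₀(x,y)} dx dy = (Z₁/Z₀) ∫_{ℝ^d} f(y) (e^{-U₁(y)}/Z₁) dy; that is, the reweighted law of the one-step ULA output is exactly the Boltzmann–Gibbs density ρ₁ = e^{-U₁}/Z₁. -/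
/-!
The Langevin kernel is reversible up to the work increment. Expanding the square,
`‖y - x + h∇U₀(x)‖² / (4h) = ‖y - x‖² / (4h) + (α₀(x,y) - U₀(x))`, and the analogous identity for
`U₁` with the roles of `x` and `y` exchanged, show that the forward path density weighted by
`e^{-α₁(y,x) + α₀(x,y)}` equals `e^{-U₁(y)}/Z₀` times the Gaussian density in `x` of a *backward*
Langevin step from `y` (`langevin_exponent_reversal`). Tonelli's theorem allows integrating over
`x` first; the backward Gaussian has mass one (`lintegral_langevin_kernel`), which leaves
`∫ f e^{-U₁} / Z₀`.
-/

open MeasureTheory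
open scoped RealInnerProductSpace

/-- The Langevin exponent expressed through `α`. -/
lemma langevin_exponent_eq {d : ℕ} {h : ℝ} (hh : 0 < h)
    (U : EuclideanSpace ℝ (Fin d) → ℝ) (x y : EuclideanSpace ℝ (Fin d)) :
    -‖y - x + h • gradient U x‖ ^ 2 / (4 * h)
      = U x - jarzynskiAlpha h U x y - ‖y - x‖ ^ 2 / (4 * h) := by
  rw [norm_add_sq_real, norm_smul, inner_smul_right, Real.norm_of_nonneg hh.le, jarzynskiAlpha]
  field_simp
  ring

/-- The forward exponent plus the work increment is the exponent of `e^{-U₁(y)}` times the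
backward Langevin step from `y` to `x`. -/
lemma langevin_exponent_reversal {d : ℕ} {h : ℝ} (hh : 0 < h)
    (U₀ U₁ : EuclideanSpace ℝ (Fin d) → ℝ) (x y : EuclideanSpace ℝ (Fin d)) :
    -U₀ x + -‖y - x + h • gradient U₀ x‖ ^ 2 / (4 * h)
        + (-(jarzynskiAlpha h U₁ y x) + jarzynskiAlpha h U₀ x y)
      = -U₁ y + -‖x - y + h • gradient U₁ y‖ ^ 2 / (4 * h) := by
  rw [langevin_exponent_eq hh, langevin_exponent_eq hh, norm_sub_rev y x]
  ring

/-- The transition density of a Langevin step from `y` with drift `-h • v` has total mass one. -/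
lemma lintegral_langevin_kernel {d : ℕ} {h : ℝ} (hh : 0 < h)
    (y v : EuclideanSpace ℝ (Fin d)) :
    ∫⁻ x, ENNReal.ofReal ((4 * Real.pi * h) ^ (-(d : ℝ) / 2)
      * Real.exp (-‖x - y + h • v‖ ^ 2 / (4 * h))) = 1 := by
  have hc : 0 < 4 * Real.pi * h := by positivity
  have hb : 0 < 1 / (4 * h) := by positivity
  have hgauss := GaussianFourier.integral_rexp_neg_mul_sq_norm
    (V := EuclideanSpace ℝ (Fin d)) hb
  have hbase : Real.pi / (1 / (4 * h)) = 4 * Real.pi * h := by field_simp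
  rw [hbase, finrank_euclideanSpace_fin] at hgauss
  -- A non-integrable function would have Bochner integral zero.
  have hint : Integrable
      (fun x : EuclideanSpace ℝ (Fin d) => Real.exp (-(1 / (4 * h)) * ‖x‖ ^ 2)) :=
    Integrable.of_integral_ne_zero (by rw [hgauss]; positivity)
  calc ∫⁻ x, ENNReal.ofReal ((4 * Real.pi * h) ^ (-(d : ℝ) / 2)
          * Real.exp (-‖x - y + h • v‖ ^ 2 / (4 * h)))
      = ∫⁻ x : EuclideanSpace ℝ (Fin d), ENNReal.ofReal ((4 * Real.pi * h) ^ (-(d : ℝ) / 2)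
          * Real.exp (-(1 / (4 * h)) * ‖x‖ ^ 2)) := by
        rw [← lintegral_add_right_eq_self (fun x : EuclideanSpace ℝ (Fin d) =>
          ENNReal.ofReal ((4 * Real.pi * h) ^ (-(d : ℝ) / 2)
            * Real.exp (-(1 / (4 * h)) * ‖x‖ ^ 2))) (-y + h • v)]
        refine lintegral_congr fun x => ?_
        rw [show x + (-y + h • v) = x - y + h • v by abel]
        congr 3
        ring
    _ = 1 := by
        rw [← ofReal_integral_eq_lintegral_ofReal (hint.const_mul _)
          (Filter.Eventually.of_forall fun x => by positivity), integral_const_mul, hgauss,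
          ← Real.rpow_add hc, neg_div, neg_add_cancel, Real.rpow_zero, ENNReal.ofReal_one]


/-- Jarzynski reweighting exactly corrects the bias of one unadjusted Langevin step:
for every measurable `f : ℝ^d → [0,∞)`, the reweighted expectation of `f` under the
one-step ULA output equals `(Z₁/Z₀) ∫ f ρ₁`, where `ρ₁ = e^{-U₁}/Z₁`. -/
theorem jarzynski_one_step_reweighted_law {d : ℕ} (h : ℝ) (hh : 0 < h)
    (U₀ U₁ : EuclideanSpace ℝ (Fin d) → ℝ)
    (hU₀ : ContDiff ℝ 1 U₀) (hU₁ : ContDiff ℝ 1 U₁)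
    (hZ₀int : Integrable (fun x => Real.exp (-U₀ x)))
    (hZ₁int : Integrable (fun y => Real.exp (-U₁ y)))
    (Z₀ Z₁ : ℝ)
    (hZ₀ : Z₀ = ∫ x, Real.exp (-U₀ x)) (hZ₀pos : 0 < Z₀)
    (hZ₁ : Z₁ = ∫ y, Real.exp (-U₁ y)) (hZ₁pos : 0 < Z₁) :
    ∀ f : EuclideanSpace ℝ (Fin d) → ℝ, Measurable f → (∀ y, 0 ≤ f y) →
      ∫⁻ x, ∫⁻ y, ENNReal.ofReal
          (f y * ((Real.exp (-U₀ x) / Z₀)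
            * (4 * Real.pi * h) ^ (-(d : ℝ) / 2)
            * Real.exp (-‖y - x + h • gradient U₀ x‖ ^ 2 / (4 * h))
            * Real.exp (-(jarzynskiAlpha h U₁ y x) + jarzynskiAlpha h U₀ x y)))
        = ENNReal.ofReal (Z₁ / Z₀)
            * ∫⁻ y, ENNReal.ofReal (f y * (Real.exp (-U₁ y) / Z₁)) := by
  intro f hf hf0
  have hpt : ∀ x y, ENNReal.ofReal
          (f y * ((Real.exp (-U₀ x) / Z₀)
            * (4 * Real.pi * h) ^ (-(d : ℝ) / 2)
            * Real.exp (-‖y - x + h • gradient U₀ x‖ ^ 2 / (4 * h))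
            * Real.exp (-(jarzynskiAlpha h U₁ y x) + jarzynskiAlpha h U₀ x y)))
      = ENNReal.ofReal (f y * (Real.exp (-U₁ y) / Z₀))
        * ENNReal.ofReal ((4 * Real.pi * h) ^ (-(d : ℝ) / 2)
          * Real.exp (-‖x - y + h • gradient U₁ y‖ ^ 2 / (4 * h))) := by
    intro x y
    have hexp := congrArg Real.exp (langevin_exponent_reversal hh U₀ U₁ x y)
    rw [Real.exp_add (_ + _), Real.exp_add (-U₀ x), Real.exp_add (-U₁ y)] at hexp
    rw [← ENNReal.ofReal_mul (mul_nonneg (hf0 y) (by positivity))]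
    congr 1
    linear_combination (f y / Z₀ * (4 * Real.pi * h) ^ (-(d : ℝ) / 2)) * hexp
  have hgrad : Continuous (gradient U₁) :=
    (InnerProductSpace.toDual ℝ (EuclideanSpace ℝ (Fin d))).symm.continuous.comp
      (hU₁.continuous_fderiv one_ne_zero)
  have hmU : Measurable U₁ := hU₁.continuous.measurable
  have hmg : Measurable (gradient U₁) := hgrad.measurable
  simp_rw [hpt]
  rw [lintegral_lintegral_swap (by unfold Function.uncurry; fun_prop),
    ← lintegral_const_mul _ (by fun_prop)]
  refine lintegral_congr fun y => ?_
  rw [lintegral_const_mul _ (by fun_prop), lintegral_langevin_kernel hh, mul_one,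
    ← ENNReal.ofReal_mul (by positivity)]
  congr 1
  field_simp
end
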